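/- For the family 𝔤₆(z₁, z₂, z₃, r, θ₁, θ₂) with z₁ ≠ 0 and z₃ ≠ 0, the structure J is integrable, i.e. the Nijenhuis tensor N(E,F) = 0 for all E, F ∈ 𝔤, if and only if r = (z₁² + z₃²)/z₃ and z₂ = (z₁² − z₃²)/(2z₃). -/

import Mathlib

noncomputable section

/-- The bilinear antisymmetric bracket on ℝ⁴ determined by the structure constants. -/
def bk (z₁ z₂ z₃ r θ₁ θ₂ : ℝ) (E F : Fin 4 → ℝ) : Fin 4 → ℝ :=
  (E 0 * F 1 - E 1 * F 0) • (![-r, 0, -θ₁, -θ₂] : Fin 4 → ℝ) +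
  (E 0 * F 2 - E 2 * F 0) • (![0, 0, -z₁, z₁ ^ 2 / z₃] : Fin 4 → ℝ) +
  (E 0 * F 3 - E 3 * F 0) • (![0, 0, -z₃, z₁] : Fin 4 → ℝ) +
  (E 1 * F 2 - E 2 * F 1) • (![0, 0, -z₂, -(z₁ * (r - 2 * z₂) / (2 * z₃))] : Fin 4 → ℝ) +
  (E 1 * F 3 - E 3 * F 1) • (![0, 0, -(z₃ * (r + 2 * z₂) / (2 * z₁)), z₂] : Fin 4 → ℝ) +
  (E 2 * F 3 - E 3 * F 2) • (![0, 0, 0, 0] : Fin 4 → ℝ)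

/-- The almost Hermitian structure J with J(X)=Y, J(Y)=-X, J(Z)=W, J(W)=-Z. -/
def Jm (E : Fin 4 → ℝ) : Fin 4 → ℝ := ![-E 1, E 0, -E 3, E 2]

/-- The Nijenhuis tensor of J. -/
def NT (z₁ z₂ z₃ r θ₁ θ₂ : ℝ) (E F : Fin 4 → ℝ) : Fin 4 → ℝ :=
  bk z₁ z₂ z₃ r θ₁ θ₂ E F + Jm (bk z₁ z₂ z₃ r θ₁ θ₂ (Jm E) F) + Jm (bk z₁ z₂ z₃ r θ₁ θ₂ E (Jm F)) -
    bk z₁ z₂ z₃ r θ₁ θ₂ (Jm E) (Jm F)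

/-!
If `J² = -1`, the Nijenhuis tensor of an antisymmetric bracket is alternating and `J`-antilinear in
each argument, so when `x`, `J x`, `y`, `J y` span the space it vanishes as soon as
`N(x, y) = 0`. For `𝔤₆` take `x = X` and `y = Z`: then `N(X, Z) = p Z + q W` with
`q = z₁² / z₃ - z₃ - 2 z₂`, and modulo `q` the coefficient `p` is a multiple of
`r - (z₁² + z₃²) / z₃` by the nonzero factor `(z₁² + z₃²) / (2 z₁ z₃)`.
-/

section Nijenhuis

variable {R V : Type*} [CommRing R] [AddCommGroup V] [Module R V]

/-- The Nijenhuis tensor `N(x, y) = [x, y] + J[Jx, y] + J[x, Jy] - [Jx, Jy]` of an endomorphism `J`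
with respect to a bracket `B`, packaged as a bilinear map. The sign convention is the one for
`J² = -1`. -/
def nijenhuis (B : V →ₗ[R] V →ₗ[R] V) (J : V →ₗ[R] V) : V →ₗ[R] V →ₗ[R] V :=
  B + (B ∘ₗ J).compr₂ J + (B.compl₂ J).compr₂ J - B.compl₁₂ J J

variable {B : V →ₗ[R] V →ₗ[R] V} {J : V →ₗ[R] V}

theorem nijenhuis_apply (x y : V) :
    nijenhuis B J x y = B x y + J (B (J x) y) + J (B x (J y)) - B (J x) (J y) :=
  rfl

theorem nijenhuis_map_left (hJ : ∀ x, J (J x) = -x) (x y : V) :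
    nijenhuis B J (J x) y = -J (nijenhuis B J x y) := by
  simp only [nijenhuis_apply, hJ, map_add, map_sub, map_neg, LinearMap.neg_apply]
  abel

theorem nijenhuis_map_right (hJ : ∀ x, J (J x) = -x) (x y : V) :
    nijenhuis B J x (J y) = -J (nijenhuis B J x y) := by
  simp only [nijenhuis_apply, hJ, map_add, map_sub, map_neg]
  abel

theorem isAlt_nijenhuis (hB : B.IsAlt) : (nijenhuis B J).IsAlt := fun x ↦ by
  rw [nijenhuis_apply, hB.self_eq_zero, hB.self_eq_zero, ← hB.neg x (J x), map_neg]
  abel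

theorem nijenhuis_eq_zero_iff_of_span (hJ : ∀ x, J (J x) = -x) {S : Set V}
    (hS : Submodule.span R (S ∪ J '' S) = ⊤) :
    nijenhuis B J = 0 ↔ ∀ x ∈ S, ∀ y ∈ S, nijenhuis B J x y = 0 := by
  refine ⟨fun h x _ y _ ↦ by simp [h], fun h ↦ LinearMap.ext_on hS fun x hx ↦
    LinearMap.ext_on hS fun y hy ↦ ?_⟩
  rcases hx with hx | ⟨x, hx, rfl⟩ <;> rcases hy with hy | ⟨y, hy, rfl⟩ <;>
    simp [nijenhuis_map_left hJ, nijenhuis_map_right hJ, h x hx y hy]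

theorem nijenhuis_eq_zero_iff_of_span_pair (hB : B.IsAlt) (hJ : ∀ x, J (J x) = -x) {x y : V}
    (hxy : Submodule.span R ({x, y} ∪ J '' {x, y}) = ⊤) :
    nijenhuis B J = 0 ↔ nijenhuis B J x y = 0 := by
  have hN : (nijenhuis B J).IsAlt := isAlt_nijenhuis hB
  simp [nijenhuis_eq_zero_iff_of_span hJ hxy, hN.self_eq_zero, hN.eq_iff (x := y) (y := x)]

end Nijenhuis

/-- The complex structure `Jm` as a linear map. -/
def jmLin : (Fin 4 → ℝ) →ₗ[ℝ] Fin 4 → ℝ where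
  toFun := Jm
  map_add' E F := by ext i; fin_cases i <;> simp [Jm] <;> ring
  map_smul' c E := by ext i; fin_cases i <;> simp [Jm]

theorem jmLin_jmLin (E : Fin 4 → ℝ) : jmLin (jmLin E) = -E := by
  ext i; fin_cases i <;> rfl

theorem span_single_zero_two_union_jmLin_image :
    Submodule.span ℝ ({Pi.single 0 1, Pi.single 2 1} ∪
      jmLin '' {Pi.single 0 1, Pi.single 2 1}) = ⊤ := by
  have hXY : jmLin (Pi.single 0 1) = Pi.single 1 1 := by
    ext i; fin_cases i <;> simp [jmLin, Jm]
  have hZW : jmLin (Pi.single 2 1) = Pi.single 3 1 := by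
    ext i; fin_cases i <;> simp [jmLin, Jm]
  rw [← top_le_iff, ← (Pi.basisFun ℝ (Fin 4)).span_eq, Set.image_pair, hXY, hZW]
  refine Submodule.span_mono ?_
  rintro _ ⟨i, rfl⟩
  fin_cases i <;> simp

section Family

variable (z₁ z₂ z₃ r θ₁ θ₂ : ℝ)

/-- The bracket `bk` of `𝔤₆` as a bilinear map. -/
def bkBilin : (Fin 4 → ℝ) →ₗ[ℝ] (Fin 4 → ℝ) →ₗ[ℝ] Fin 4 → ℝ :=
  LinearMap.mk₂ ℝ (bk z₁ z₂ z₃ r θ₁ θ₂)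
    (fun E E' F ↦ by simp only [bk, Pi.add_apply]; module)
    (fun c E F ↦ by simp only [bk, Pi.smul_apply, smul_eq_mul]; module)
    (fun E F F' ↦ by simp only [bk, Pi.add_apply]; module)
    (fun c E F ↦ by simp only [bk, Pi.smul_apply, smul_eq_mul]; module)

theorem isAlt_bkBilin : (bkBilin z₁ z₂ z₃ r θ₁ θ₂).IsAlt := fun E ↦ by
  simp only [bkBilin, LinearMap.mk₂_apply, bk]
  module

theorem nijenhuis_bkBilin_apply (E F : Fin 4 → ℝ) :
    nijenhuis (bkBilin z₁ z₂ z₃ r θ₁ θ₂) jmLin E F = NT z₁ z₂ z₃ r θ₁ θ₂ E F :=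
  rfl

theorem forall_nt_eq_zero_iff :
    (∀ E F : Fin 4 → ℝ, NT z₁ z₂ z₃ r θ₁ θ₂ E F = 0) ↔
      NT z₁ z₂ z₃ r θ₁ θ₂ (Pi.single 0 1) (Pi.single 2 1) = 0 := by
  simp only [← nijenhuis_bkBilin_apply]
  rw [← nijenhuis_eq_zero_iff_of_span_pair (isAlt_bkBilin z₁ z₂ z₃ r θ₁ θ₂)
    jmLin_jmLin span_single_zero_two_union_jmLin_image, LinearMap.ext_iff₂]
  rfl

theorem nt_single_zero_single_two :
    NT z₁ z₂ z₃ r θ₁ θ₂ (Pi.single 0 1) (Pi.single 2 1) =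
      ![0, 0, -2 * z₁ + z₁ * (r - 2 * z₂) / (2 * z₃) + z₃ * (r + 2 * z₂) / (2 * z₁),
        z₁ ^ 2 / z₃ - z₃ - 2 * z₂] := by
  ext i
  fin_cases i <;> simp [NT, bk, Jm] <;> ring

end Family

theorem nijenhuis_coeffs_eq_zero_iff {K : Type*} [Field K] [NeZero (2 : K)] {z₁ z₂ z₃ r : K}
    (h1 : z₁ ≠ 0) (h3 : z₃ ≠ 0) (h : z₁ ^ 2 + z₃ ^ 2 ≠ 0) :
    (-2 * z₁ + z₁ * (r - 2 * z₂) / (2 * z₃) + z₃ * (r + 2 * z₂) / (2 * z₁) = 0 ∧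
      z₁ ^ 2 / z₃ - z₃ - 2 * z₂ = 0) ↔
    r = (z₁ ^ 2 + z₃ ^ 2) / z₃ ∧ z₂ = (z₁ ^ 2 - z₃ ^ 2) / (2 * z₃) := by
  have h2 : (2 : K) ≠ 0 := two_ne_zero
  have hW : z₁ ^ 2 / z₃ - z₃ - 2 * z₂ = 2 * ((z₁ ^ 2 - z₃ ^ 2) / (2 * z₃) - z₂) := by
    field_simp
  have hZ : -2 * z₁ + z₁ * (r - 2 * z₂) / (2 * z₃) + z₃ * (r + 2 * z₂) / (2 * z₁) =
      (z₁ ^ 2 + z₃ ^ 2) / (2 * z₁ * z₃) * (r - (z₁ ^ 2 + z₃ ^ 2) / z₃) +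
        (z₁ ^ 2 - z₃ ^ 2) / (2 * z₁ * z₃) * (z₁ ^ 2 / z₃ - z₃ - 2 * z₂) := by
    field_simp
    ring
  have h_factor : (z₁ ^ 2 + z₃ ^ 2) / (2 * z₁ * z₃) ≠ 0 :=
    div_ne_zero h (mul_ne_zero (mul_ne_zero h2 h1) h3)
  have hW_iff : z₁ ^ 2 / z₃ - z₃ - 2 * z₂ = 0 ↔ z₂ = (z₁ ^ 2 - z₃ ^ 2) / (2 * z₃) := by
    rw [hW, mul_eq_zero_iff_left h2, sub_eq_zero, eq_comm]
  rw [← hW_iff]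
  refine and_congr_left fun hW_zero ↦ ?_
  rw [hZ, hW_zero, mul_zero, add_zero, mul_eq_zero_iff_left h_factor, sub_eq_zero]

theorem g6_integrable_iff (z₁ z₂ z₃ r θ₁ θ₂ : ℝ) (h1 : z₁ ≠ 0) (h3 : z₃ ≠ 0) :
    (∀ E F : Fin 4 → ℝ, NT z₁ z₂ z₃ r θ₁ θ₂ E F = 0) ↔
    (r = (z₁ ^ 2 + z₃ ^ 2) / z₃ ∧ z₂ = (z₁ ^ 2 - z₃ ^ 2) / (2 * z₃)) := by
  have h : z₁ ^ 2 + z₃ ^ 2 ≠ 0 := by positivity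
  rw [forall_nt_eq_zero_iff, nt_single_zero_single_two, ← nijenhuis_coeffs_eq_zero_iff h1 h3 h]
  simp [funext_iff, Fin.forall_fin_succ]

end
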